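/- arXiv:2502.16042 — 2 statements merged into one kernel-verified Lean document; each statement's English description precedes it below -/
import Mathlib

section
/- Let (X,Y) be a bivariate normal random vector where X and Y each have the standard normal distribution N(0,1) and Corr(X,Y) = ρ with ρ ∈ [−1,1]. Then for all a, b ∈ ℝ, Cov(1{X ≤ a}, 1{Y ≤ b}) = ∫₀^ρ (2π√(1−r²))⁻¹ exp(−(a² + b² − 2 r a b)/(2(1−r²))) dr. -/
open MeasureTheory ProbabilityTheory Matrix Real
open scoped BigOperators ENNReal NNReal

noncomputable section

/-- Covariance of two real random variables on a measure space. -/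
def cov {Ω : Type*} [MeasureSpace Ω] (U V : Ω → ℝ) : ℝ :=
  (∫ ω, U ω * V ω) - (∫ ω, U ω) * (∫ ω, V ω)

/-! The covariance is `F ρ - F 0`, where `F r` is the joint distribution function at `(a, b)` of
the standard bivariate normal law with correlation `r`, because `F 0` is the product of the
marginals. So it suffices to show Plackett's identity `∂F/∂r = p_r(a, b)` for `|r| < 1` and that
`F` is continuous up to `r = ±1`, where the law is degenerate but still does not charge the
boundary of the quadrant.

Conditioning on the first coordinate, `F r = ∫_{x ≤ a} φ(x) Φ((b - r x) / √(1 - r²)) dx`, and the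
`r`-derivative of this integrand equals the `x`-derivative of `p_r(x, b)`. Hence differentiating
under the integral sign gives `∂F/∂r = ∫_{x ≤ a} ∂ₓ p_r(x, b) dx = p_r(a, b)`. Since `p_r ≥ 0` and
`F` is continuous on `[-1, 1]`, `p_r(a, b)` is integrable in `r` up to `r = ±1`. -/

section

open Set Filter Topology

lemma cov_indicator_one {Ω : Type*} [MeasureSpace Ω] {A B : Set Ω}
    (hA : MeasurableSet A) (hB : MeasurableSet B) :
    cov (A.indicator 1) (B.indicator 1) =
      volume.real (A ∩ B) - volume.real A * volume.real B := by
  have hAB : (fun ω => A.indicator (1 : Ω → ℝ) ω * B.indicator 1 ω) = (A ∩ B).indicator 1 := by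
    rw [inter_indicator_one]
    rfl
  rw [cov, hAB, integral_indicator_one (hA.inter hB), integral_indicator_one hA,
    integral_indicator_one hB]

lemma cov_indicator_preimage {Ω α β : Type*} [MeasureSpace Ω] [MeasurableSpace α]
    [MeasurableSpace β] {X : Ω → α} {Y : Ω → β} (hX : Measurable X) (hY : Measurable Y)
    {A : Set α} {B : Set β} (hA : MeasurableSet A) (hB : MeasurableSet B) :
    cov ((X ⁻¹' A).indicator 1) ((Y ⁻¹' B).indicator 1) =
      (volume.map fun ω => (X ω, Y ω)).real (A ×ˢ B) -
        (volume.map X).real A * (volume.map Y).real B := by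
  rw [cov_indicator_one (hX hA) (hY hB), map_measureReal_apply (hX.prodMk hY) (hA.prod hB),
    map_measureReal_apply hX hA, map_measureReal_apply hY hB, mk_preimage_prod]

lemma measureReal_prod_eq_integral {α β : Type*} [MeasurableSpace α] [MeasurableSpace β]
    (μ : Measure α) (ν : Measure β) [IsFiniteMeasure ν] {S : Set (α × β)} (hS : MeasurableSet S) :
    (μ.prod ν).real S = ∫ x, ν.real (Prod.mk x ⁻¹' S) ∂μ := by
  rw [Measure.real, Measure.prod_apply hS]
  exact (integral_toReal (measurable_measure_prodMk_left hS).aemeasurable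
    (ae_of_all _ fun _ => measure_lt_top _ _)).symm

lemma continuousAt_measureReal_preimage {T Ω E : Type*} [TopologicalSpace T]
    [FirstCountableTopology T] [MeasurableSpace Ω] {μ : Measure Ω} [IsFiniteMeasure μ]
    [TopologicalSpace E] [MeasurableSpace E] {f : T → Ω → E} {t₀ : T} {S : Set E}
    (hf : ∀ t, Measurable (f t)) (hcont : ∀ ω, ContinuousAt (fun t => f t ω) t₀)
    (hS : MeasurableSet S) (hfrontier : μ (f t₀ ⁻¹' frontier S) = 0) :
    ContinuousAt (fun t => μ.real (f t ⁻¹' S)) t₀ := by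
  refine (ENNReal.tendsto_toReal (measure_ne_top _ _)).comp
    (tendsto_measure_of_ae_tendsto_indicator_of_isFiniteMeasure (𝓝 t₀) (hf t₀ hS)
      (fun t => hf t hS) ?_)
  filter_upwards [measure_eq_zero_iff_ae_notMem.1 hfrontier] with ω hω
  have hnear {U : Set E} (hU : f t₀ ω ∈ U) (hfr : f t₀ ω ∉ frontier U) :
      ∀ᶠ t in 𝓝 t₀, f t ω ∈ U :=
    (hcont ω).eventually_mem
      (mem_interior_iff_mem_nhds.1 (by_contra fun hi => hfr ⟨subset_closure hU, hi⟩))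
  by_cases hmem : f t₀ ω ∈ S
  · filter_upwards [hnear hmem hω] with t ht using iff_of_true ht hmem
  · filter_upwards [hnear (U := Sᶜ) hmem (by rwa [frontier_compl])] with t ht
      using iff_of_false ht hmem

lemma hasDerivAt_integral_Iic {E : Type*} [NormedAddCommGroup E] [NormedSpace ℝ E]
    [CompleteSpace E] {f : ℝ → E} {t : ℝ} (hf : Integrable f) (hcont : ContinuousAt f t) :
    HasDerivAt (fun u => ∫ x in Iic u, f x) (f t) t := by
  have hsplit : (fun u => ∫ x in Iic u, f x) =
      fun u => (∫ x in Iic 0, f x) + ∫ x in (0 : ℝ)..u, f x := by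
    funext u
    rw [← intervalIntegral.integral_Iic_sub_Iic hf.integrableOn hf.integrableOn,
      add_sub_cancel]
  rw [hsplit]
  exact (intervalIntegral.integral_hasDerivAt_right hf.intervalIntegrable
    hf.aestronglyMeasurable.stronglyMeasurableAtFilter hcont).const_add _

lemma setIntegral_gaussianReal {E : Type*} [NormedAddCommGroup E] [NormedSpace ℝ E] (μ : ℝ)
    {v : ℝ≥0} (hv : v ≠ 0) {S : Set ℝ} (hS : MeasurableSet S) (f : ℝ → E) :
    ∫ x in S, f x ∂gaussianReal μ v = ∫ x in S, gaussianPDFReal μ v x • f x := by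
  rw [gaussianReal_of_var_ne_zero μ hv, setIntegral_withDensity_eq_setIntegral_toReal_smul
    (measurable_gaussianPDF μ v) (ae_of_all _ fun _ => gaussianPDF_lt_top) f hS]
  simp only [toReal_gaussianPDF]

lemma continuous_gaussianPDFReal (μ : ℝ) (v : ℝ≥0) : Continuous (gaussianPDFReal μ v) := by
  rw [gaussianPDFReal_def]
  fun_prop

lemma hasDerivAt_cdf_gaussianReal (μ : ℝ) {v : ℝ≥0} (hv : v ≠ 0) (t : ℝ) :
    HasDerivAt (cdf (gaussianReal μ v)) (gaussianPDFReal μ v t) t := by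
  have hcdf : ⇑(cdf (gaussianReal μ v)) = fun u => ∫ x in Iic u, gaussianPDFReal μ v x := by
    funext u
    rw [cdf_eq_real, Measure.real, gaussianReal_apply_eq_integral μ hv,
      ENNReal.toReal_ofReal (integral_nonneg (gaussianPDFReal_nonneg μ v))]
  rw [hcdf]
  exact hasDerivAt_integral_Iic (integrable_gaussianPDFReal μ v)
    (continuous_gaussianPDFReal μ v).continuousAt

lemma gaussianReal_prod_map_add_mul (μ₁ μ₂ : ℝ) (v₁ v₂ : ℝ≥0) (c d : ℝ) :
    ((gaussianReal μ₁ v₁).prod (gaussianReal μ₂ v₂)).map (fun z => c * z.1 + d * z.2) =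
      gaussianReal (c * μ₁ + d * μ₂)
        (.mk (c ^ 2) (sq_nonneg c) * v₁ + .mk (d ^ 2) (sq_nonneg d) * v₂) := by
  rw [← gaussianReal_conv_gaussianReal, ← gaussianReal_map_const_mul c,
    ← gaussianReal_map_const_mul d, Measure.conv,
    Measure.map_prod_map _ _ (by fun_prop) (by fun_prop),
    Measure.map_map (by fun_prop) (by fun_prop)]
  rfl

lemma one_sub_sq_pos {r : ℝ} (hr : |r| < 1) : 0 < 1 - r ^ 2 :=
  sub_pos.2 ((sq_lt_one_iff_abs_lt_one r).2 hr)

/-- The bivariate normal law with standard marginals and correlation `ρ ∈ [-1, 1]`, encoded as the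
law of `(Z₁, ρ Z₁ + √(1 - ρ²) Z₂)` for independent standard normal `Z₁, Z₂`, so that the degenerate
cases `ρ = ±1` are included. -/
def stdBivariateGaussian (ρ : ℝ) : Measure (ℝ × ℝ) :=
  ((gaussianReal 0 1).prod (gaussianReal 0 1)).map
    fun z => (z.1, ρ * z.1 + √(1 - ρ ^ 2) * z.2)

/-- The density `p_ρ(x, y)` of `stdBivariateGaussian ρ` for `|ρ| < 1`; for `|ρ| ≥ 1` it takes the
junk value `0`. -/
def stdBivariateGaussianPDFReal (ρ x y : ℝ) : ℝ :=
  (2 * π * √(1 - ρ ^ 2))⁻¹ *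
    rexp (-((x ^ 2 + y ^ 2 - 2 * ρ * x * y) / (2 * (1 - ρ ^ 2))))

lemma measurable_stdBivariateGaussian_map (ρ : ℝ) :
    Measurable fun z : ℝ × ℝ => (z.1, ρ * z.1 + √(1 - ρ ^ 2) * z.2) := by
  fun_prop

lemma stdBivariateGaussian_zero :
    stdBivariateGaussian 0 = (gaussianReal 0 1).prod (gaussianReal 0 1) := by
  simp [stdBivariateGaussian]

lemma fst_stdBivariateGaussian (ρ : ℝ) : (stdBivariateGaussian ρ).fst = gaussianReal 0 1 := by
  rw [stdBivariateGaussian, Measure.fst_map_prodMk (by fun_prop)]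
  exact Measure.fst_prod

lemma snd_stdBivariateGaussian {ρ : ℝ} (hρ : ρ ∈ Icc (-1) 1) :
    (stdBivariateGaussian ρ).snd = gaussianReal 0 1 := by
  have hvar : 0 ≤ 1 - ρ ^ 2 := by nlinarith [hρ.1, hρ.2]
  rw [stdBivariateGaussian, Measure.snd_map_prodMk (by fun_prop), gaussianReal_prod_map_add_mul]
  congr 1
  · ring
  · ext
    simp [Real.sq_sqrt hvar]

lemma stdBivariateGaussian_frontier_Iic_prod_Iic {ρ : ℝ} (hρ : ρ ∈ Icc (-1) 1) (a b : ℝ) :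
    stdBivariateGaussian ρ (frontier (Iic a ×ˢ Iic b)) = 0 := by
  have := nullSingletonClass_gaussianReal (μ := 0) one_ne_zero
  have hfst : stdBivariateGaussian ρ (Prod.fst ⁻¹' {a}) = 0 := by
    rw [← Measure.fst_apply (measurableSet_singleton a), fst_stdBivariateGaussian,
      measure_singleton]
  have hsnd : stdBivariateGaussian ρ (Prod.snd ⁻¹' {b}) = 0 := by
    rw [← Measure.snd_apply (measurableSet_singleton b), snd_stdBivariateGaussian hρ,
      measure_singleton]
  refine measure_mono_null ?_ (measure_union_null hfst hsnd)
  rw [frontier_prod_eq, frontier_Iic, frontier_Iic]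
  rintro z (⟨-, hz⟩ | ⟨hz, -⟩)
  exacts [Or.inr hz, Or.inl hz]

lemma continuousOn_stdBivariateGaussian_Iic_prod_Iic (a b : ℝ) :
    ContinuousOn (fun r => (stdBivariateGaussian r).real (Iic a ×ˢ Iic b)) (Icc (-1) 1) := by
  intro ρ hρ
  have hquad : MeasurableSet (Iic a ×ˢ Iic b) := measurableSet_Iic.prod measurableSet_Iic
  have hnull := stdBivariateGaussian_frontier_Iic_prod_Iic hρ a b
  simp only [stdBivariateGaussian] at hnull ⊢
  rw [Measure.map_apply (measurable_stdBivariateGaussian_map ρ) isClosed_frontier.measurableSet]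
    at hnull
  simp only [map_measureReal_apply (measurable_stdBivariateGaussian_map _) hquad]
  exact (continuousAt_measureReal_preimage measurable_stdBivariateGaussian_map
    (fun z => by fun_prop) hquad hnull).continuousWithinAt

lemma stdBivariateGaussian_Iic_prod_Iic_eq_setIntegral {ρ : ℝ} (hρ : |ρ| < 1) (a b : ℝ) :
    (stdBivariateGaussian ρ).real (Iic a ×ˢ Iic b) =
      ∫ x in Iic a, gaussianPDFReal 0 1 x *
        cdf (gaussianReal 0 1) ((b - ρ * x) / √(1 - ρ ^ 2)) := by
  have hs : 0 < √(1 - ρ ^ 2) := Real.sqrt_pos.2 (one_sub_sq_pos hρ)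
  have hquad : MeasurableSet (Iic a ×ˢ Iic b) := measurableSet_Iic.prod measurableSet_Iic
  have hmap := measurable_stdBivariateGaussian_map ρ
  rw [stdBivariateGaussian, map_measureReal_apply hmap hquad,
    measureReal_prod_eq_integral _ _ (hmap hquad)]
  simp only [← smul_eq_mul (a := gaussianPDFReal 0 1 _)]
  rw [← setIntegral_gaussianReal 0 one_ne_zero measurableSet_Iic,
    ← integral_indicator measurableSet_Iic]
  congr 1 with x
  by_cases hx : x ≤ a
  · rw [indicator_of_mem (mem_Iic.2 hx), cdf_eq_real]
    congr 1
    ext y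
    simp [hx, le_div_iff₀ hs, le_sub_iff_add_le', mul_comm y]
  · rw [indicator_of_notMem (notMem_Iic.2 (not_le.1 hx))]
    convert measureReal_empty
    ext y
    simp [hx]

lemma stdBivariateGaussianPDFReal_nonneg (ρ x y : ℝ) : 0 ≤ stdBivariateGaussianPDFReal ρ x y := by
  unfold stdBivariateGaussianPDFReal
  positivity

lemma continuous_stdBivariateGaussianPDFReal_fst (ρ y : ℝ) :
    Continuous fun x => stdBivariateGaussianPDFReal ρ x y := by
  unfold stdBivariateGaussianPDFReal
  fun_prop

lemma stdBivariateGaussianPDFReal_eq_mul {ρ : ℝ} (hρ : |ρ| < 1) (x y : ℝ) :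
    stdBivariateGaussianPDFReal ρ x y =
      gaussianPDFReal 0 1 x *
        (gaussianPDFReal 0 1 ((y - ρ * x) / √(1 - ρ ^ 2)) / √(1 - ρ ^ 2)) := by
  have hvar := one_sub_sq_pos hρ
  have hexp : rexp (-((x ^ 2 + y ^ 2 - 2 * ρ * x * y) / (2 * (1 - ρ ^ 2)))) =
      rexp (-x ^ 2 / 2) * rexp (-((y - ρ * x) / √(1 - ρ ^ 2)) ^ 2 / 2) := by
    rw [← Real.exp_add, div_pow, Real.sq_sqrt hvar.le]
    congr 1
    field_simp
    ring
  have hconst : (2 * π * √(1 - ρ ^ 2))⁻¹ = (√(2 * π))⁻¹ * ((√(2 * π))⁻¹ / √(1 - ρ ^ 2)) := by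
    rw [div_eq_mul_inv, ← mul_assoc, ← mul_inv, ← mul_inv,
      Real.mul_self_sqrt Real.two_pi_pos.le]
  simp only [stdBivariateGaussianPDFReal, gaussianPDFReal, NNReal.coe_one, mul_one, sub_zero,
    hexp, hconst]
  ring

lemma stdBivariateGaussianPDFReal_le {ρ : ℝ} (hρ : |ρ| < 1) (x y : ℝ) :
    stdBivariateGaussianPDFReal ρ x y ≤ (2 * π * √(1 - ρ ^ 2))⁻¹ * rexp (-(1 / 2) * x ^ 2) := by
  have hvar := one_sub_sq_pos hρ
  have hexponent : 1 / 2 * x ^ 2 ≤ (x ^ 2 + y ^ 2 - 2 * ρ * x * y) / (2 * (1 - ρ ^ 2)) := by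
    rw [le_div_iff₀ (by positivity)]
    linarith [sq_nonneg (y - ρ * x)]
  unfold stdBivariateGaussianPDFReal
  gcongr
  linarith

lemma integrable_stdBivariateGaussianPDFReal_fst {ρ : ℝ} (hρ : |ρ| < 1) (y : ℝ) :
    Integrable fun x => stdBivariateGaussianPDFReal ρ x y := by
  refine ((integrable_exp_neg_mul_sq one_half_pos).const_mul (2 * π * √(1 - ρ ^ 2))⁻¹).mono'
    (continuous_stdBivariateGaussianPDFReal_fst ρ y).aestronglyMeasurable (ae_of_all _ fun x => ?_)
  rw [Real.norm_of_nonneg (stdBivariateGaussianPDFReal_nonneg ρ x y)]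
  exact stdBivariateGaussianPDFReal_le hρ x y

lemma hasDerivAt_stdBivariateGaussianPDFReal_fst (ρ x y : ℝ) :
    HasDerivAt (fun x => stdBivariateGaussianPDFReal ρ x y)
      (stdBivariateGaussianPDFReal ρ x y * ((ρ * y - x) / (1 - ρ ^ 2))) x := by
  have hquadratic :
      HasDerivAt (fun x => x ^ 2 + y ^ 2 - 2 * ρ * x * y) (2 * (x - ρ * y)) x := by
    refine ((((hasDerivAt_id x).pow 2).add_const (y ^ 2)).sub
      (((hasDerivAt_id x).const_mul (2 * ρ)).mul_const y)).congr_deriv ?_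
    simp only [id_eq]
    ring
  refine ((hquadratic.div_const (2 * (1 - ρ ^ 2))).neg.exp.const_mul
    (2 * π * √(1 - ρ ^ 2))⁻¹).congr_deriv ?_
  rw [mul_div_mul_left _ _ two_ne_zero, ← neg_div, neg_sub]
  exact (mul_assoc _ _ _).symm

lemma abs_deriv_stdBivariateGaussianPDFReal_fst_le {ρ c : ℝ} (hρ : |ρ| ≤ c) (hc : c < 1)
    (x y : ℝ) :
    |stdBivariateGaussianPDFReal ρ x y * ((ρ * y - x) / (1 - ρ ^ 2))| ≤
      (2 * π * √(1 - c ^ 2))⁻¹ * rexp (-(1 / 2) * x ^ 2) * ((|y| + |x|) / (1 - c ^ 2)) := by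
  have hρ1 : |ρ| < 1 := hρ.trans_lt hc
  have hvarρ : 0 < 1 - ρ ^ 2 := one_sub_sq_pos hρ1
  have hvarc : 0 < 1 - c ^ 2 := one_sub_sq_pos (abs_lt.2 ⟨by linarith [abs_nonneg ρ], hc⟩)
  have hvar : 1 - c ^ 2 ≤ 1 - ρ ^ 2 := by
    linarith [sq_le_sq' (by linarith [neg_abs_le ρ]) ((le_abs_self ρ).trans hρ)]
  have hnum : |ρ * y - x| ≤ |y| + |x| :=
    calc |ρ * y - x| ≤ |ρ * y| + |x| := abs_sub _ _
      _ = |ρ| * |y| + |x| := by rw [abs_mul]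
      _ ≤ |y| + |x| := by gcongr; exact mul_le_of_le_one_left (abs_nonneg y) hρ1.le
  rw [abs_mul, abs_div, abs_of_nonneg (stdBivariateGaussianPDFReal_nonneg ρ x y),
    abs_of_pos hvarρ]
  calc stdBivariateGaussianPDFReal ρ x y * (|ρ * y - x| / (1 - ρ ^ 2))
      ≤ (2 * π * √(1 - ρ ^ 2))⁻¹ * rexp (-(1 / 2) * x ^ 2) * (|ρ * y - x| / (1 - ρ ^ 2)) := by
        gcongr
        exact stdBivariateGaussianPDFReal_le hρ1 x y
    _ ≤ (2 * π * √(1 - c ^ 2))⁻¹ * rexp (-(1 / 2) * x ^ 2) * ((|y| + |x|) / (1 - c ^ 2)) := by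
        gcongr

lemma integrable_exp_neg_half_sq_mul_add_abs (C k d : ℝ) :
    Integrable fun x : ℝ => C * rexp (-(1 / 2) * x ^ 2) * ((k + |x|) / d) := by
  have hconst := (integrable_exp_neg_mul_sq one_half_pos).const_mul (C * (k / d))
  have hlinear := (integrable_mul_exp_neg_mul_sq one_half_pos).abs.const_mul (C / d)
  refine (hconst.add hlinear).congr (ae_of_all _ fun x => ?_)
  simp only [Pi.add_apply, abs_mul, Real.abs_exp]
  ring

lemma integral_Iic_deriv_stdBivariateGaussianPDFReal_fst {ρ : ℝ} (hρ : |ρ| < 1) (a y : ℝ) :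
    ∫ x in Iic a, stdBivariateGaussianPDFReal ρ x y * ((ρ * y - x) / (1 - ρ ^ 2)) =
      stdBivariateGaussianPDFReal ρ a y := by
  have hderiv : ∀ x ∈ Iic a, HasDerivAt (fun x => stdBivariateGaussianPDFReal ρ x y)
      (stdBivariateGaussianPDFReal ρ x y * ((ρ * y - x) / (1 - ρ ^ 2))) x :=
    fun x _ => hasDerivAt_stdBivariateGaussianPDFReal_fst ρ x y
  have hderivInt : Integrable fun x =>
      stdBivariateGaussianPDFReal ρ x y * ((ρ * y - x) / (1 - ρ ^ 2)) :=
    (integrable_exp_neg_half_sq_mul_add_abs _ _ _).mono'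
      ((continuous_stdBivariateGaussianPDFReal_fst ρ y).mul (by fun_prop)).aestronglyMeasurable
      (ae_of_all _ fun x => abs_deriv_stdBivariateGaussianPDFReal_fst_le le_rfl hρ x y)
  have hlim : Tendsto (fun x => stdBivariateGaussianPDFReal ρ x y) atBot (𝓝 0) :=
    tendsto_zero_of_hasDerivAt_of_integrableOn_Iic hderiv hderivInt.integrableOn
      (integrable_stdBivariateGaussianPDFReal_fst hρ y).integrableOn
  rw [integral_Iic_of_hasDerivAt_of_tendsto' hderiv hderivInt.integrableOn hlim, sub_zero]

lemma hasDerivAt_sub_mul_div_sqrt {r : ℝ} (hr : |r| < 1) (x y : ℝ) :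
    HasDerivAt (fun r => (y - r * x) / √(1 - r ^ 2))
      ((r * y - x) / (1 - r ^ 2) / √(1 - r ^ 2)) r := by
  have hvar := one_sub_sq_pos hr
  have hs : √(1 - r ^ 2) ≠ 0 := (Real.sqrt_pos.2 hvar).ne'
  have hsq : √(1 - r ^ 2) ^ 2 = 1 - r ^ 2 := Real.sq_sqrt hvar.le
  have hnum : HasDerivAt (fun r => y - r * x) (-x) r := by
    simpa using ((hasDerivAt_id r).mul_const x).const_sub y
  have hden : HasDerivAt (fun r => √(1 - r ^ 2)) (-(2 * r) / (2 * √(1 - r ^ 2))) r := by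
    simpa using ((hasDerivAt_pow 2 r).const_sub 1).sqrt hvar.ne'
  refine (hnum.div hden hs).congr_deriv ?_
  rw [hsq]
  field_simp
  rw [hsq]
  ring

lemma hasDerivAt_gaussianPDFReal_mul_cdf {r : ℝ} (hr : |r| < 1) (x y : ℝ) :
    HasDerivAt
      (fun r => gaussianPDFReal 0 1 x * cdf (gaussianReal 0 1) ((y - r * x) / √(1 - r ^ 2)))
      (stdBivariateGaussianPDFReal r x y * ((r * y - x) / (1 - r ^ 2))) r := by
  refine (((hasDerivAt_cdf_gaussianReal 0 one_ne_zero _).comp r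
    (hasDerivAt_sub_mul_div_sqrt hr x y)).const_mul _).congr_deriv ?_
  rw [stdBivariateGaussianPDFReal_eq_mul hr]
  ring

lemma integrable_gaussianPDFReal_mul_cdf (ρ y : ℝ) :
    Integrable fun x =>
      gaussianPDFReal 0 1 x * cdf (gaussianReal 0 1) ((y - ρ * x) / √(1 - ρ ^ 2)) := by
  have hmeas : Measurable fun x => cdf (gaussianReal 0 1) ((y - ρ * x) / √(1 - ρ ^ 2)) :=
    (monotone_cdf _).measurable.comp (by fun_prop)
  refine (integrable_gaussianPDFReal 0 1).mul_bdd (c := 1) hmeas.aestronglyMeasurable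
    (ae_of_all _ fun x => ?_)
  rw [Real.norm_of_nonneg (cdf_nonneg _ _)]
  exact cdf_le_one _ _

theorem hasDerivAt_stdBivariateGaussian_Iic_prod_Iic {ρ : ℝ} (hρ : |ρ| < 1) (a b : ℝ) :
    HasDerivAt (fun r => (stdBivariateGaussian r).real (Iic a ×ˢ Iic b))
      (stdBivariateGaussianPDFReal ρ a b) ρ := by
  obtain ⟨c, hρc, hc⟩ := exists_between hρ
  have hnhds : {r | |r| < c} ∈ 𝓝 ρ := continuous_abs.continuousAt.eventually_lt_const hρc
  have hderiv : HasDerivAt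
      (fun r => ∫ x in Iic a,
        gaussianPDFReal 0 1 x * cdf (gaussianReal 0 1) ((b - r * x) / √(1 - r ^ 2)))
      (∫ x in Iic a, stdBivariateGaussianPDFReal ρ x b * ((ρ * b - x) / (1 - ρ ^ 2))) ρ :=
    (hasDerivAt_integral_of_dominated_loc_of_deriv_le hnhds
      (Eventually.of_forall fun r =>
        (integrable_gaussianPDFReal_mul_cdf r b).aestronglyMeasurable.restrict)
      (integrable_gaussianPDFReal_mul_cdf ρ b).integrableOn
      ((continuous_stdBivariateGaussianPDFReal_fst ρ b).mul (by fun_prop)).aestronglyMeasurable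
      (ae_of_all _ fun x _ hr => abs_deriv_stdBivariateGaussianPDFReal_fst_le (le_of_lt hr) hc x b)
      (integrable_exp_neg_half_sq_mul_add_abs _ _ _).integrableOn
      (ae_of_all _ fun x _ hr => hasDerivAt_gaussianPDFReal_mul_cdf (lt_trans hr hc) x b)).2
  rw [integral_Iic_deriv_stdBivariateGaussianPDFReal_fst hρ] at hderiv
  refine hderiv.congr_of_eventuallyEq ?_
  filter_upwards [hnhds] with r hr
  exact stdBivariateGaussian_Iic_prod_Iic_eq_setIntegral (lt_trans hr hc) a b

theorem intervalIntegral_stdBivariateGaussianPDFReal {ρ₁ ρ₂ : ℝ} (hρ₁ : ρ₁ ∈ Icc (-1) 1)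
    (hρ₂ : ρ₂ ∈ Icc (-1) 1) (a b : ℝ) :
    ∫ r in ρ₁..ρ₂, stdBivariateGaussianPDFReal r a b =
      (stdBivariateGaussian ρ₂).real (Iic a ×ˢ Iic b) -
        (stdBivariateGaussian ρ₁).real (Iic a ×ˢ Iic b) := by
  have hcont := (continuousOn_stdBivariateGaussian_Iic_prod_Iic a b).mono
    (uIcc_subset_Icc hρ₁ hρ₂)
  have hderiv : ∀ r ∈ Ioo (min ρ₁ ρ₂) (max ρ₁ ρ₂),
      HasDerivAt (fun r => (stdBivariateGaussian r).real (Iic a ×ˢ Iic b))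
        (stdBivariateGaussianPDFReal r a b) r := fun r hr =>
    hasDerivAt_stdBivariateGaussian_Iic_prod_Iic
      (abs_lt.2 ⟨(le_min hρ₁.1 hρ₂.1).trans_lt hr.1, hr.2.trans_le (max_le hρ₁.2 hρ₂.2)⟩) a b
  exact intervalIntegral.integral_eq_sub_of_hasDeriv_right hcont
    (fun r hr => (hderiv r hr).hasDerivWithinAt)
    (intervalIntegral.intervalIntegrable_deriv_of_nonneg hcont hderiv
      fun r _ => stdBivariateGaussianPDFReal_nonneg r a b)

end

/-- If `(X, Y)` is bivariate normal with standard normal marginals and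
correlation `ρ ∈ [−1, 1]`, then for all `a, b ∈ ℝ`,
`Cov(1{X ≤ a}, 1{Y ≤ b}) = ∫₀^ρ (2π√(1−r²))⁻¹ exp(−(a²+b²−2rab)/(2(1−r²))) dr`.
The joint normality is expressed by saying that `(X, Y)` has the law of
`(Z₁, ρ Z₁ + √(1−ρ²) Z₂)` for independent standard normal `Z₁, Z₂`. -/
theorem cov_indicator_bivariate_gaussian
    {Ω : Type*} [MeasureSpace Ω] [IsProbabilityMeasure (volume : Measure Ω)]
    (X Y : Ω → ℝ) (hX : Measurable X) (hY : Measurable Y)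
    (ρ : ℝ) (hρ : ρ ∈ Set.Icc (-1 : ℝ) 1)
    (hlaw : Measure.map (fun ω => (X ω, Y ω)) volume =
      Measure.map (fun z : ℝ × ℝ => (z.1, ρ * z.1 + Real.sqrt (1 - ρ ^ 2) * z.2))
        ((gaussianReal 0 1).prod (gaussianReal 0 1)))
    (a b : ℝ) :
    cov (fun ω => if X ω ≤ a then (1 : ℝ) else 0)
        (fun ω => if Y ω ≤ b then (1 : ℝ) else 0) =
      ∫ r in (0 : ℝ)..ρ,
        (2 * π * Real.sqrt (1 - r ^ 2))⁻¹ *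
          Real.exp (-((a ^ 2 + b ^ 2 - 2 * r * a * b) / (2 * (1 - r ^ 2)))) := by
  have hpair : volume.map (fun ω => (X ω, Y ω)) = stdBivariateGaussian ρ := hlaw
  have hXlaw : volume.map X = gaussianReal 0 1 := by
    rw [← fst_stdBivariateGaussian ρ, ← hpair, Measure.fst_map_prodMk hY]
  have hYlaw : volume.map Y = gaussianReal 0 1 := by
    rw [← snd_stdBivariateGaussian hρ, ← hpair, Measure.snd_map_prodMk hX]
  have hindicator (Z : Ω → ℝ) (t : ℝ) :
      (fun ω => if Z ω ≤ t then (1 : ℝ) else 0) = (Z ⁻¹' Set.Iic t).indicator 1 := by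
    funext ω
    by_cases hω : Z ω ≤ t <;> simp [hω]
  have hzero : (stdBivariateGaussian 0).real (Set.Iic a ×ˢ Set.Iic b) =
      (gaussianReal 0 1).real (Set.Iic a) * (gaussianReal 0 1).real (Set.Iic b) := by
    rw [stdBivariateGaussian_zero, measureReal_prod_prod]
  rw [hindicator, hindicator, cov_indicator_preimage hX hY measurableSet_Iic measurableSet_Iic,
    hpair, hXlaw, hYlaw, ← hzero]
  exact (intervalIntegral_stdBivariateGaussianPDFReal (by norm_num) hρ a b).symm

end
end

section
/- (Mehler covariance expansion.) Let g, h ∈ L²_φ and let (X,Y) be bivariate normal with standard N(0,1) marginals and Corr(X,Y) = ρ ∈ [−1,1]. Then Cov(g(X), h(Y)) = Σ_{m=1}^{∞} α_m[g] α_m[h] ρ^m, with the series converging. -/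
open MeasureTheory ProbabilityTheory Matrix Real
open scoped BigOperators ENNReal NNReal

noncomputable section

/-- The `m`-th probabilists' Hermite polynomial `He_m`, evaluated at a real number. -/
def He (m : ℕ) (x : ℝ) : ℝ := Polynomial.aeval x (Polynomial.hermite m)

/-- The normalized Hermite polynomial `h_m = He_m / √(m!)`. -/
def hnorm (m : ℕ) (x : ℝ) : ℝ := He m x / Real.sqrt (Nat.factorial m)

/-- The `m`-th Hermite coefficient `α_m[g] = E[g(Z) h_m(Z)]`, `Z ~ N(0,1)`. -/
def hermCoeff (g : ℝ → ℝ) (m : ℕ) : ℝ := ∫ z, g z * hnorm m z ∂(gaussianReal 0 1)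

/-!
Exponential moments make the standard Gaussian measure `γ` and its `L²` densities
moment-determinate, so polynomials are total in `L²(γ)` and the normalized Hermite polynomials form
a Hilbert basis of it. Gaussian integration by parts in the first of two independent coordinates
gives `E[He_{m+1}(X) p(Y)] = ρ E[He_m(X) p'(Y)]` for every polynomial `p`, hence
`E[h_m(X) h_n(Y)] = δ_{mn} ρ^n`; orthonormality is the case `ρ = 1`. Composition with `X` and with
`Y` are isometries on `L²(γ)`, so the bounded bilinear form `(g, h) ↦ E[g(X) h(Y)]` is diagonal in
this basis, and its term at `m = 0` is the product of the means.
-/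

section HilbertSpace

variable {𝕜 E F : Type*} [RCLike 𝕜] [NormedAddCommGroup E] [InnerProductSpace 𝕜 E]
  [NormedAddCommGroup F] [InnerProductSpace 𝕜 F]

lemma inner_toLp_toLp {α : Type*} [MeasurableSpace α] {μ : Measure α} {u v : α → E}
    (hu : MemLp u 2 μ) (hv : MemLp v 2 μ) :
    inner 𝕜 (hu.toLp u) (hv.toLp v) = ∫ x, inner 𝕜 (u x) (v x) ∂μ := by
  rw [L2.inner_def]
  refine integral_congr_ae ?_
  filter_upwards [hu.coeFn_toLp, hv.coeFn_toLp] with x hux hvx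
  rw [hux, hvx]

lemma hasSum_inner_map_map_of_diagonal [CompleteSpace E] [CompleteSpace F] {ι : Type*}
    [DecidableEq ι] (b : HilbertBasis ι 𝕜 E) (A B : E →L[𝕜] F) (c : ι → 𝕜)
    (hAB : ∀ i j, inner 𝕜 (A (b i)) (B (b j)) = if i = j then c j else 0) (u v : E) :
    HasSum (fun i => inner 𝕜 u (b i) * inner 𝕜 (b i) v * c i) (inner 𝕜 (A u) (B v)) := by
  have eigen (j : ι) : A.adjoint (B (b j)) = c j • b j := by
    refine b.repr.injective (lp.ext (funext fun i => ?_))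
    simp [b.repr_apply_apply, ContinuousLinearMap.adjoint_inner_right, hAB,
      orthonormal_iff_ite.mp b.orthonormal]
  rw [← ContinuousLinearMap.adjoint_inner_right]
  simpa [eigen, b.repr_apply_apply, inner_smul_right, mul_assoc, mul_comm, mul_left_comm] using
    (((b.hasSum_repr v).mapL B).mapL A.adjoint).mapL (innerSL 𝕜 u)

end HilbertSpace

section ExponentialMoments

variable {μ ν : Measure ℝ}

lemma mgf_eventuallyEq_of_moments (hμ : 0 ∈ interior (integrableExpSet id μ))
    (hν : 0 ∈ interior (integrableExpSet id ν)) (h : ∀ n : ℕ, ∫ x, x ^ n ∂μ = ∫ x, x ^ n ∂ν) :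
    mgf id μ =ᶠ[nhds 0] mgf id ν := by
  have hμ_sum := (hasFPowerSeriesAt_mgf hμ).eventually_hasSum
  have hν_sum := (hasFPowerSeriesAt_mgf hν).eventually_hasSum
  simp only [id_eq, zero_mul, Real.exp_zero, mul_one, zero_add, h] at hμ_sum hν_sum
  filter_upwards [hμ_sum, hν_sum] with t htμ htν using htμ.unique htν

-- Both complex moment generating functions are analytic on a vertical strip around the imaginary
-- axis, so agreement at real points near `0` propagates to the axis, that is, to the
-- characteristic functions.
lemma measure_ext_of_mgf_eventuallyEq [IsFiniteMeasure μ] [IsFiniteMeasure ν]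
    (hμ : 0 ∈ interior (integrableExpSet id μ)) (hν : 0 ∈ interior (integrableExpSet id ν))
    (h : mgf id μ =ᶠ[nhds 0] mgf id ν) : μ = ν := by
  let strip := Complex.re ⁻¹' (interior (integrableExpSet id μ) ∩ interior (integrableExpSet id ν))
  have mul_I_mem_strip (t : ℝ) : t * Complex.I ∈ strip := by simp [strip, hμ, hν]
  have isPreconnected_strip : IsPreconnected strip :=
    ((convex_integrableExpSet.interior.inter convex_integrableExpSet.interior).linear_preimage
      Complex.reLm).isPreconnected
  have tendsto_ofReal : Filter.Tendsto ((↑) : ℝ → ℂ) (nhdsWithin 0 {0}ᶜ) (nhdsWithin 0 {0}ᶜ) :=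
    Complex.continuous_ofReal.continuousWithinAt.tendsto_nhdsWithin fun t ht => by simpa using ht
  have frequently_eq :
      ∃ᶠ z in nhdsWithin (0 : ℂ) {0}ᶜ, complexMGF id μ z = complexMGF id ν z := by
    refine tendsto_ofReal.frequently (Filter.Eventually.frequently ?_)
    filter_upwards [h.filter_mono nhdsWithin_le_nhds] with t ht
    rw [complexMGF_ofReal, complexMGF_ofReal, ht]
  have eqOn_strip : Set.EqOn (complexMGF id μ) (complexMGF id ν) strip :=
    (analyticOnNhd_complexMGF.mono fun _ hz => hz.1).eqOn_of_preconnected_of_frequently_eq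
      (analyticOnNhd_complexMGF.mono fun _ hz => hz.2) isPreconnected_strip
      (by simpa using mul_I_mem_strip 0) frequently_eq
  refine Measure.ext_of_charFun (funext fun t => ?_)
  rw [← complexMGF_id_mul_I, ← complexMGF_id_mul_I, eqOn_strip (mul_I_mem_strip t)]

lemma measure_ext_of_moments [IsFiniteMeasure μ] [IsFiniteMeasure ν]
    (hμ : 0 ∈ interior (integrableExpSet id μ)) (hν : 0 ∈ interior (integrableExpSet id ν))
    (h : ∀ n : ℕ, ∫ x, x ^ n ∂μ = ∫ x, x ^ n ∂ν) : μ = ν :=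
  measure_ext_of_mgf_eventuallyEq hμ hν (mgf_eventuallyEq_of_moments hμ hν h)

lemma integral_withDensity_ofReal {α : Type*} [MeasurableSpace α] {μ : Measure α} {f : α → ℝ}
    (hf : AEMeasurable f μ) (k : α → ℝ) :
    ∫ x, k x ∂μ.withDensity (fun x => ENNReal.ofReal (f x)) = ∫ x, max (f x) 0 * k x ∂μ := by
  simp [integral_withDensity_eq_integral_toReal_smul₀ hf.ennreal_ofReal, ENNReal.toReal_ofReal']

lemma zero_mem_interior_integrableExpSet_withDensity {f : ℝ → ℝ}
    (hf : MemLp f 2 μ) (h0 : 0 ∈ interior (integrableExpSet id μ)) :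
    0 ∈ interior (integrableExpSet id (μ.withDensity fun x => ENNReal.ofReal (f x))) := by
  rw [mem_interior_iff_mem_nhds] at h0 ⊢
  have h_double : Filter.Tendsto (fun t : ℝ => 2 * t) (nhds 0) (nhds 0) := by
    simpa using (continuous_const_mul (2 : ℝ)).tendsto 0
  filter_upwards [h_double h0] with t ht
  have h_exp : MemLp (fun x => Real.exp (t * x)) 2 μ := by
    rw [memLp_two_iff_integrable_sq (by fun_prop)]
    convert! (show Integrable (fun x => Real.exp (2 * t * x)) μ from ht) using 2 with x
    rw [← Real.exp_nat_mul]
    ring_nf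
  refine (integrable_withDensity_iff_integrable_smul₀' hf.1.aemeasurable.ennreal_ofReal
    (ae_of_all _ fun _ => ENNReal.ofReal_lt_top)).2 ?_
  simp only [ENNReal.toReal_ofReal', smul_eq_mul, id_eq]
  exact hf.pos_part.integrable_mul h_exp

variable [IsFiniteMeasure μ]

lemma memLp_polynomial_eval (h0 : 0 ∈ interior (integrableExpSet id μ)) {q : ℝ≥0∞}
    (hq : q ≠ ∞) (p : Polynomial ℝ) : MemLp (fun x => p.eval x) q μ := by
  lift q to ℝ≥0 using hq
  have memLp_pow (n : ℕ) : MemLp (fun x : ℝ => x ^ n) q μ := by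
    rcases eq_or_ne n 0 with rfl | hn
    · simpa using memLp_const 1
    have h := (memLp_of_mem_interior_integrableExpSet h0 (q * n)).norm_rpow_div n
    rw [← memLp_norm_iff (by fun_prop)]
    simpa [ENNReal.mul_div_cancel_right, hn] using h
  induction p using Polynomial.induction_on' with
  | add p q hp hq =>
    simp only [Polynomial.eval_add]
    exact hp.add hq
  | monomial n a => simpa only [Polynomial.eval_monomial] using (memLp_pow n).const_mul a

lemma ae_eq_zero_of_integral_mul_pow_eq_zero (h0 : 0 ∈ interior (integrableExpSet id μ))
    {f : ℝ → ℝ} (hf : MemLp f 2 μ) (hmom : ∀ n : ℕ, ∫ x, f x * x ^ n ∂μ = 0) : f =ᵐ[μ] 0 := by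
  have hfi : Integrable f μ := hf.integrable one_le_two
  have := isFiniteMeasure_withDensity_ofReal hfi.2
  have := isFiniteMeasure_withDensity_ofReal hfi.neg.2
  have h_pow (n : ℕ) : MemLp (fun x : ℝ => x ^ n) 2 μ := by
    simpa using memLp_polynomial_eval h0 (q := 2) ENNReal.ofNat_ne_top (Polynomial.X ^ n)
  have h_int {k : ℝ → ℝ} (hk : MemLp k 2 μ) (n : ℕ) :
      Integrable (fun x => max (k x) 0 * x ^ n) μ :=
    hk.pos_part.integrable_mul (h_pow n)
  have h_eq : μ.withDensity (fun x => ENNReal.ofReal (f x)) =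
      μ.withDensity (fun x => ENNReal.ofReal ((-f) x)) := by
    refine measure_ext_of_moments (zero_mem_interior_integrableExpSet_withDensity hf h0)
      (zero_mem_interior_integrableExpSet_withDensity hf.neg h0) fun n => ?_
    rw [integral_withDensity_ofReal hfi.1.aemeasurable,
      integral_withDensity_ofReal hfi.neg.1.aemeasurable, ← sub_eq_zero,
      ← integral_sub (h_int hf n) (h_int hf.neg n)]
    simpa only [Pi.neg_apply, ← sub_mul, max_zero_sub_max_neg_zero_eq_self] using hmom n
  rw [withDensity_eq_iff_of_sigmaFinite hfi.1.aemeasurable.ennreal_ofReal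
    hfi.neg.1.aemeasurable.ennreal_ofReal] at h_eq
  filter_upwards [h_eq] with x hx
  have h_max : max (f x) 0 = max (-f x) 0 := by
    simpa [ENNReal.toReal_ofReal'] using congrArg ENNReal.toReal hx
  simpa [h_max] using (max_zero_sub_max_neg_zero_eq_self (f x)).symm

lemma ae_eq_zero_of_integral_mul_polynomialSequence_eq_zero
    (h0 : 0 ∈ interior (integrableExpSet id μ)) (S : Polynomial.Sequence ℝ) {f : ℝ → ℝ}
    (hf : MemLp f 2 μ) (hS : ∀ n, ∫ x, f x * (S n).eval x ∂μ = 0) : f =ᵐ[μ] 0 := by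
  have h_span : Submodule.span ℝ (Set.range S) = ⊤ :=
    S.span fun n => (Polynomial.leadingCoeff_ne_zero.mpr (S.ne_zero n)).isUnit
  have h_int (p : Polynomial ℝ) : Integrable (fun x => f x * p.eval x) μ :=
    hf.integrable_mul (memLp_polynomial_eval h0 (q := 2) ENNReal.ofNat_ne_top p)
  have h_poly (p : Polynomial ℝ) : ∫ x, f x * p.eval x ∂μ = 0 := by
    induction (h_span ▸ Submodule.mem_top : p ∈ Submodule.span ℝ (Set.range S))
      using Submodule.span_induction with
    | mem p hp => obtain ⟨n, rfl⟩ := hp; exact hS n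
    | zero => simp
    | add p q _ _ hp hq =>
      simp only [Polynomial.eval_add, mul_add, integral_add (h_int p) (h_int q), hp, hq, add_zero]
    | smul a p _ hp =>
      simp only [Polynomial.eval_smul, smul_eq_mul, mul_left_comm, integral_const_mul, hp, mul_zero]
  exact ae_eq_zero_of_integral_mul_pow_eq_zero h0 hf fun n => by
    simpa using h_poly (Polynomial.X ^ n)

end ExponentialMoments

section Gaussian

lemma hasDerivAt_gaussianPDFReal (m : ℝ) (v : ℝ≥0) (x : ℝ) :
    HasDerivAt (gaussianPDFReal m v) (-((x - m) / v) * gaussianPDFReal m v x) x := by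
  have h_exponent : HasDerivAt (fun x : ℝ => -(x - m) ^ 2 / (2 * v)) (-((x - m) / v)) x := by
    refine ((((hasDerivAt_id x).sub_const m).pow 2).neg.div_const (2 * (v : ℝ))).congr_deriv ?_
    simp only [id_eq]
    ring
  rw [gaussianPDFReal_def]
  exact (h_exponent.exp.const_mul (√(2 * π * v))⁻¹).congr_deriv (by ring)

variable {E : Type*} [NormedAddCommGroup E] [NormedSpace ℝ E] {m : ℝ} {v : ℝ≥0}

lemma integrable_gaussianReal_iff_integrable_smul (hv : v ≠ 0) {f : ℝ → E} :
    Integrable f (gaussianReal m v) ↔ Integrable (fun x => gaussianPDFReal m v x • f x) := by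
  rw [gaussianReal_of_var_ne_zero _ hv, integrable_withDensity_iff_integrable_smul'
    (measurable_gaussianPDF _ _) (ae_of_all _ fun _ => gaussianPDF_lt_top)]
  simp only [toReal_gaussianPDF]

lemma integral_sub_smul_gaussianReal [CompleteSpace E] {f f' : ℝ → E}
    (hf : ∀ x, HasDerivAt f (f' x) x) (hf_int : Integrable f (gaussianReal m v))
    (hf'_int : Integrable f' (gaussianReal m v))
    (hxf_int : Integrable (fun x => (x - m) • f x) (gaussianReal m v)) :
    ∫ x, (x - m) • f x ∂gaussianReal m v = (v : ℝ) • ∫ x, f' x ∂gaussianReal m v := by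
  rcases eq_or_ne v 0 with rfl | hv
  · simp [integral_dirac]
  have hv' : (v : ℝ) ≠ 0 := mod_cast hv
  have h_deriv (x : ℝ) : HasDerivAt (fun x => gaussianPDFReal m v x • f x)
      (gaussianPDFReal m v x • (f' x - (v : ℝ)⁻¹ • (x - m) • f x)) x := by
    refine ((hasDerivAt_gaussianPDFReal m v x).smul (hf x)).congr_deriv ?_
    rw [div_eq_inv_mul]
    module
  have h_int : Integrable (fun x => (v : ℝ)⁻¹ • (x - m) • f x) (gaussianReal m v) :=
    hxf_int.smul _
  have h_zero : ∫ x, (f' x - (v : ℝ)⁻¹ • (x - m) • f x) ∂gaussianReal m v = 0 := by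
    rw [integral_gaussianReal_eq_integral_smul hv]
    exact integral_eq_zero_of_hasDerivAt_of_integrable h_deriv
      ((integrable_gaussianReal_iff_integrable_smul hv).1 (hf'_int.sub h_int))
      ((integrable_gaussianReal_iff_integrable_smul hv).1 hf_int)
  rw [integral_sub hf'_int h_int, integral_smul, sub_eq_zero] at h_zero
  rw [h_zero, smul_inv_smul₀ hv']

lemma zero_mem_interior_integrableExpSet_gaussianReal (m : ℝ) (v : ℝ≥0) :
    0 ∈ interior (integrableExpSet id (gaussianReal m v)) := by
  simp [integrableExpSet_id_gaussianReal]

lemma memLp_polynomial_eval_gaussianReal (m : ℝ) (v : ℝ≥0) (p : Polynomial ℝ) :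
    MemLp (fun x => p.eval x) 2 (gaussianReal m v) :=
  memLp_polynomial_eval (zero_mem_interior_integrableExpSet_gaussianReal m v)
    ENNReal.ofNat_ne_top p

lemma integrable_polynomial_eval_gaussianReal (m : ℝ) (v : ℝ≥0) (p : Polynomial ℝ) :
    Integrable (fun x => p.eval x) (gaussianReal m v) :=
  (memLp_polynomial_eval_gaussianReal m v p).integrable one_le_two

lemma integral_sub_mul_polynomial_eval_gaussianReal (m : ℝ) (v : ℝ≥0) (p : Polynomial ℝ) :
    ∫ x, (x - m) * p.eval x ∂gaussianReal m v =
      v * ∫ x, p.derivative.eval x ∂gaussianReal m v := by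
  have h_mul : Integrable (fun x => (x - m) • p.eval x) (gaussianReal m v) := by
    refine (integrable_polynomial_eval_gaussianReal m v
      ((Polynomial.X - Polynomial.C m) * p)).congr (ae_of_all _ fun x => ?_)
    simp
  exact integral_sub_smul_gaussianReal p.hasDerivAt
    (integrable_polynomial_eval_gaussianReal m v _)
    (integrable_polynomial_eval_gaussianReal m v _) h_mul

lemma hasLaw_mul_fst_add_mul_snd_gaussianReal (m₁ m₂ : ℝ) (v₁ v₂ : ℝ≥0) (a s : ℝ) :
    HasLaw (fun z : ℝ × ℝ => a * z.1 + s * z.2)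
      (gaussianReal (a * m₁ + s * m₂)
        (.mk (a ^ 2) (sq_nonneg a) * v₁ + .mk (s ^ 2) (sq_nonneg s) * v₂))
      ((gaussianReal m₁ v₁).prod (gaussianReal m₂ v₂)) := by
  rw [← gaussianReal_conv_gaussianReal]
  exact (indepFun_prod (X := (a * ·)) (Y := (s * ·)) (by fun_prop) (by fun_prop)).hasLaw_fun_add
    (gaussianReal_const_mul measurePreserving_fst.hasLaw a)
    (gaussianReal_const_mul measurePreserving_snd.hasLaw s)

lemma integrable_polynomial_eval_fst_mul_eval (m₁ m₂ : ℝ) (v₁ v₂ : ℝ≥0) (p q : Polynomial ℝ)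
    (a s : ℝ) :
    Integrable (fun z : ℝ × ℝ => p.eval z.1 * q.eval (a * z.1 + s * z.2))
      ((gaussianReal m₁ v₁).prod (gaussianReal m₂ v₂)) :=
  ((memLp_polynomial_eval_gaussianReal _ _ p).comp_measurePreserving
    measurePreserving_fst).integrable_mul
  ((memLp_polynomial_eval_gaussianReal _ _ q).comp_measurePreserving
    ((hasLaw_mul_fst_add_mul_snd_gaussianReal m₁ m₂ v₁ v₂ a s).measurePreserving (by fun_prop)))

lemma measurePreserving_mul_fst_add_mul_snd {a s : ℝ} (has : a ^ 2 + s ^ 2 = 1) :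
    MeasurePreserving (fun z : ℝ × ℝ => a * z.1 + s * z.2)
      ((gaussianReal 0 1).prod (gaussianReal 0 1)) (gaussianReal 0 1) := by
  have h_law := hasLaw_mul_fst_add_mul_snd_gaussianReal 0 0 1 1 a s
  have h_var : NNReal.mk (a ^ 2) (sq_nonneg a) * 1 + .mk (s ^ 2) (sq_nonneg s) * 1 = 1 :=
    NNReal.eq (by simpa using has)
  rw [h_var, mul_zero, mul_zero, add_zero] at h_law
  exact h_law.measurePreserving (by fun_prop)

end Gaussian

section Hermite

local notation "γ" => gaussianReal 0 1

/-- The probabilists' Hermite polynomials `He_m` with real coefficients, bundled with the fact that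
there is one of each degree, so that they span `ℝ[X]`. -/
def realHermite : Polynomial.Sequence ℝ where
  elems' m := (Polynomial.hermite m).map (Int.castRingHom ℝ)
  degree_eq' m := by
    rw [Polynomial.degree_map_eq_of_injective (Int.castRingHom ℝ).injective_int,
      Polynomial.degree_hermite]

lemma realHermite_apply (m : ℕ) :
    realHermite m = (Polynomial.hermite m).map (Int.castRingHom ℝ) := rfl

lemma realHermite_zero : realHermite 0 = 1 := by simp [realHermite_apply]

lemma realHermite_succ (n : ℕ) :
    realHermite (n + 1) = Polynomial.X * realHermite n - (realHermite n).derivative := by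
  simp [realHermite_apply, Polynomial.hermite_succ, Polynomial.derivative_map]

lemma derivative_realHermite_succ (n : ℕ) :
    (realHermite (n + 1)).derivative = Polynomial.C ((n : ℝ) + 1) * realHermite n := by
  induction n with
  | zero => simp [realHermite_succ, realHermite_zero]
  | succ n ih =>
    rw [realHermite_succ (n + 1), Polynomial.derivative_sub, Polynomial.derivative_mul, ih,
      Polynomial.derivative_C_mul, realHermite_succ n]
    simp only [Polynomial.derivative_X, Nat.cast_add, Nat.cast_one, map_add, map_one]
    ring

lemma hnorm_eq_eval_realHermite (m : ℕ) (x : ℝ) :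
    hnorm m x = (realHermite m).eval x / √(m.factorial : ℝ) := by
  simp [hnorm, He, realHermite_apply, Polynomial.aeval_def, Polynomial.eval_map]

@[fun_prop]
lemma measurable_hnorm (m : ℕ) : Measurable (hnorm m) := by
  simpa only [← hnorm_eq_eval_realHermite] using
    (realHermite m).continuous.measurable.div_const √(m.factorial : ℝ)

lemma integral_realHermite_succ_mul (n : ℕ) (p : Polynomial ℝ) :
    ∫ x, (realHermite (n + 1)).eval x * p.eval x ∂γ =
      ∫ x, (realHermite n).eval x * p.derivative.eval x ∂γ := by
  have h_int := integrable_polynomial_eval_gaussianReal 0 1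
  have stein (q : Polynomial ℝ) :
      ∫ x, (Polynomial.X * q).eval x ∂γ = ∫ x, q.derivative.eval x ∂γ := by
    simpa using integral_sub_mul_polynomial_eval_gaussianReal 0 1 q
  calc ∫ x, (realHermite (n + 1)).eval x * p.eval x ∂γ
    _ = ∫ x, ((Polynomial.X * (realHermite n * p)).eval x -
          ((realHermite n).derivative * p).eval x) ∂γ := by
      simp only [← Polynomial.eval_mul, ← Polynomial.eval_sub, realHermite_succ, sub_mul, mul_assoc]
    _ = ∫ x, (realHermite n * p).derivative.eval x ∂γ -
          ∫ x, ((realHermite n).derivative * p).eval x ∂γ := by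
      rw [integral_sub (h_int _) (h_int _), stein]
    _ = ∫ x, (realHermite n).eval x * p.derivative.eval x ∂γ := by
      rw [← integral_sub (h_int _) (h_int _)]
      simp [Polynomial.derivative_mul]

lemma integral_prod_realHermite_succ_mul (m : ℕ) (p : Polynomial ℝ) (a s : ℝ) :
    ∫ z : ℝ × ℝ, (realHermite (m + 1)).eval z.1 * p.eval (a * z.1 + s * z.2) ∂(γ).prod γ =
      a * ∫ z : ℝ × ℝ, (realHermite m).eval z.1 * p.derivative.eval (a * z.1 + s * z.2)
        ∂(γ).prod γ := by
  rw [integral_prod_symm _ (integrable_polynomial_eval_fst_mul_eval ..),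
    integral_prod_symm _ (integrable_polynomial_eval_fst_mul_eval ..), ← integral_const_mul]
  refine integral_congr_ae (ae_of_all _ fun y => ?_)
  have ibp := integral_realHermite_succ_mul m
    (p.comp (Polynomial.C a * Polynomial.X + Polynomial.C (s * y)))
  simpa [Polynomial.derivative_comp, Polynomial.eval_comp, mul_left_comm, integral_const_mul]
    using ibp

lemma integral_prod_realHermite_mul_realHermite {a s : ℝ} (has : a ^ 2 + s ^ 2 = 1) (m n : ℕ) :
    ∫ z : ℝ × ℝ, (realHermite m).eval z.1 * (realHermite n).eval (a * z.1 + s * z.2) ∂(γ).prod γ =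
      if m = n then n.factorial * a ^ n else 0 := by
  induction m generalizing n with
  | zero =>
    cases n with
    | zero => simp [realHermite_zero]
    | succ n =>
      have h_mean : ∫ x, (realHermite (n + 1)).eval x ∂γ = 0 := by
        simpa using integral_realHermite_succ_mul n 1
      simpa [realHermite_zero] using
        ((measurePreserving_mul_fst_add_mul_snd has).hasLaw.integral_comp
          (memLp_polynomial_eval_gaussianReal 0 1 _).1).trans h_mean
  | succ m ih =>
    rw [integral_prod_realHermite_succ_mul]
    cases n with
    | zero => simp [realHermite_zero]
    | succ n =>
      simp only [derivative_realHermite_succ, Polynomial.eval_mul, Polynomial.eval_C,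
        mul_left_comm _ ((n : ℝ) + 1), integral_const_mul, ih, Nat.succ_inj]
      split_ifs
      · push_cast [Nat.factorial_succ, pow_succ]
        ring
      · simp

lemma integral_prod_hnorm_mul_hnorm {a s : ℝ} (has : a ^ 2 + s ^ 2 = 1) (m n : ℕ) :
    ∫ z : ℝ × ℝ, hnorm m z.1 * hnorm n (a * z.1 + s * z.2) ∂(γ).prod γ =
      if m = n then a ^ n else 0 := by
  simp only [hnorm_eq_eval_realHermite, div_mul_div_comm, integral_div,
    integral_prod_realHermite_mul_realHermite has]
  split_ifs with h
  · subst h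
    rw [Real.mul_self_sqrt (by positivity)]
    field_simp
  · simp

lemma integral_hnorm_mul_hnorm (m n : ℕ) :
    ∫ x, hnorm m x * hnorm n x ∂γ = if m = n then 1 else 0 := by
  have h := integral_prod_hnorm_mul_hnorm (a := 1) (s := 0) (by norm_num) m n
  simp only [one_mul, zero_mul, add_zero, one_pow] at h
  rw [← h, integral_fun_fst (fun x => hnorm m x * hnorm n x)]
  simp

lemma memLp_hnorm (m : ℕ) : MemLp (hnorm m) 2 γ := by
  simpa only [← div_eq_inv_mul, ← hnorm_eq_eval_realHermite] using
    (memLp_polynomial_eval_gaussianReal 0 1 (realHermite m)).const_mul (√(m.factorial : ℝ))⁻¹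

/-- The normalized Hermite polynomial `h_m` as an element of `L²(γ)`. -/
def hnormLp (m : ℕ) : Lp ℝ 2 γ := (memLp_hnorm m).toLp (hnorm m)

lemma inner_hnormLp_toLp {g : ℝ → ℝ} (hg : MemLp g 2 γ) (m : ℕ) :
    inner ℝ (hnormLp m) (hg.toLp g) = hermCoeff g m := by
  rw [hnormLp, inner_toLp_toLp]
  rfl

lemma orthonormal_hnormLp : Orthonormal ℝ hnormLp := by
  refine orthonormal_iff_ite.mpr fun m n => ?_
  refine (inner_hnormLp_toLp (memLp_hnorm n) m).trans ?_
  simpa only [hermCoeff, eq_comm] using integral_hnorm_mul_hnorm n m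

lemma orthogonal_span_range_hnormLp : (Submodule.span ℝ (Set.range hnormLp))ᗮ = ⊥ := by
  refine (Submodule.eq_bot_iff _).mpr fun f hf => (Lp.eq_zero_iff_ae_eq_zero).mpr ?_
  refine ae_eq_zero_of_integral_mul_polynomialSequence_eq_zero
    (zero_mem_interior_integrableExpSet_gaussianReal 0 1) realHermite (Lp.memLp f) fun m => ?_
  have h_inner : inner ℝ (hnormLp m) f = 0 :=
    (Submodule.mem_orthogonal _ _).mp hf _ (Submodule.subset_span ⟨m, rfl⟩)
  rw [← Lp.toLp_coeFn f (Lp.memLp f), inner_hnormLp_toLp, hermCoeff] at h_inner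
  simpa [hnorm_eq_eval_realHermite, ← mul_div_assoc, integral_div, m.factorial_ne_zero]
    using h_inner

/-- The Hilbert basis of `L²(γ)` formed by the normalized Hermite polynomials. -/
def hermiteBasis : HilbertBasis ℕ ℝ (Lp ℝ 2 γ) :=
  HilbertBasis.mkOfOrthogonalEqBot orthonormal_hnormLp orthogonal_span_range_hnormLp

lemma coe_hermiteBasis : ⇑hermiteBasis = hnormLp := HilbertBasis.coe_mkOfOrthogonalEqBot _ _

lemma hasSum_hermCoeff_of_diagonal {α : Type*} [MeasurableSpace α] {μ : Measure α} {X Y : α → ℝ}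
    (hX : MeasurePreserving X μ γ) (hY : MeasurePreserving Y μ γ) {c : ℕ → ℝ}
    (hXY : ∀ m n, ∫ ω, hnorm m (X ω) * hnorm n (Y ω) ∂μ = if m = n then c n else 0)
    {g h : ℝ → ℝ} (hg : MemLp g 2 γ) (hh : MemLp h 2 γ) :
    HasSum (fun m => hermCoeff g m * hermCoeff h m * c m) (∫ ω, g (X ω) * h (Y ω) ∂μ) := by
  let A := Lp.compMeasurePreservingₗᵢ (E := ℝ) (p := 2) ℝ X hX
  let B := Lp.compMeasurePreservingₗᵢ (E := ℝ) (p := 2) ℝ Y hY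
  have inner_comp {u v : ℝ → ℝ} (hu : MemLp u 2 γ) (hv : MemLp v 2 γ) :
      inner ℝ (A (hu.toLp u)) (B (hv.toLp v)) = ∫ ω, u (X ω) * v (Y ω) ∂μ := by
    change inner ℝ (Lp.compMeasurePreserving X hX _) (Lp.compMeasurePreserving Y hY _) = _
    rw [Lp.toLp_compMeasurePreserving, Lp.toLp_compMeasurePreserving, inner_toLp_toLp]
    simp [mul_comm]
  have h_sum := hasSum_inner_map_map_of_diagonal hermiteBasis A.toContinuousLinearMap
    B.toContinuousLinearMap c
    (fun m n => by simpa [coe_hermiteBasis] using! (inner_comp _ _).trans (hXY m n))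
    (hg.toLp g) (hh.toLp h)
  simpa [coe_hermiteBasis, inner_hnormLp_toLp, real_inner_comm, inner_comp] using h_sum

lemma hermCoeff_zero (g : ℝ → ℝ) : hermCoeff g 0 = ∫ x, g x ∂γ := by
  simp [hermCoeff, hnorm, He]

end Hermite

/-- **Mehler covariance expansion.** For `g, h ∈ L²_φ` and `(X, Y)` bivariate
normal with standard normal marginals and correlation `ρ ∈ [−1, 1]`,
`Cov(g(X), h(Y)) = Σ_{m≥1} α_m[g] α_m[h] ρ^m`, the series converging. -/
theorem mehler_covariance_expansion
    {Ω : Type*} [MeasureSpace Ω] [IsProbabilityMeasure (volume : Measure Ω)]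
    (g h : ℝ → ℝ) (hgm : Measurable g) (hhm : Measurable h)
    (hg : MemLp g 2 (gaussianReal 0 1)) (hh : MemLp h 2 (gaussianReal 0 1))
    (X Y : Ω → ℝ) (hX : Measurable X) (hY : Measurable Y)
    (ρ : ℝ) (hρ : ρ ∈ Set.Icc (-1 : ℝ) 1)
    (hlaw : Measure.map (fun ω => (X ω, Y ω)) volume =
      Measure.map (fun z : ℝ × ℝ => (z.1, ρ * z.1 + Real.sqrt (1 - ρ ^ 2) * z.2))
        ((gaussianReal 0 1).prod (gaussianReal 0 1))) :
    HasSum (fun m : ℕ => hermCoeff g (m + 1) * hermCoeff h (m + 1) * ρ ^ (m + 1))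
      (cov (fun ω => g (X ω)) (fun ω => h (Y ω))) := by
  have hsq : ρ ^ 2 + √(1 - ρ ^ 2) ^ 2 = 1 := by
    rw [Real.sq_sqrt (by nlinarith [hρ.1, hρ.2])]
    ring
  have hXY : IdentDistrib (fun ω => (X ω, Y ω))
      (fun z : ℝ × ℝ => (z.1, ρ * z.1 + √(1 - ρ ^ 2) * z.2)) volume
      ((gaussianReal 0 1).prod (gaussianReal 0 1)) := ⟨by fun_prop, by fun_prop, hlaw⟩
  have hX_law : MeasurePreserving X volume (gaussianReal 0 1) :=
    ⟨hX, (hXY.comp measurable_fst).map_eq.trans measurePreserving_fst.map_eq⟩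
  have hY_law : MeasurePreserving Y volume (gaussianReal 0 1) :=
    ⟨hY, (hXY.comp measurable_snd).map_eq.trans
      (measurePreserving_mul_fst_add_mul_snd hsq).map_eq⟩
  have hpair (m n : ℕ) : ∫ ω, hnorm m (X ω) * hnorm n (Y ω) = if m = n then ρ ^ n else 0 :=
    (hXY.comp (u := fun z : ℝ × ℝ => hnorm m z.1 * hnorm n z.2) (by fun_prop)).integral_eq.trans
      (integral_prod_hnorm_mul_hnorm hsq m n)
  have hgX : ∫ ω, g (X ω) = hermCoeff g 0 :=
    (hX_law.hasLaw.integral_comp hg.1).trans (hermCoeff_zero g).symm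
  have hhY : ∫ ω, h (Y ω) = hermCoeff h 0 :=
    (hY_law.hasLaw.integral_comp hh.1).trans (hermCoeff_zero h).symm
  have hsum := hasSum_hermCoeff_of_diagonal hX_law hY_law hpair hg hh
  simpa [cov, hgX, hhY] using (hasSum_nat_add_iff' 1).2 hsum

end
end
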